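/- arXiv:1408.1449 — 6 statements merged into one kernel-verified Lean document; each statement's English description precedes it below -/
import Mathlib

section
/- Let K be a field of characteristic zero (e.g. ℂ), let n ≥ 1, and let V be the K-vector space with basis {b_1, …, b_n, a_1, …, a_n}. In the exterior algebra Λ(V), for an n × n matrix M with entries in K, set ω = Σ_{i,j} M_{ij} · b_i ∧ a_j (a degree-2 element). Then ω^n = n! · (det M) · (b_1 ∧ a_1 ∧ b_2 ∧ a_2 ∧ ⋯ ∧ b_n ∧ a_n). (This is the exterior-algebra form of the fermionic Gaussian integral ∫ dψ dψ̄ e^{ψ̄ M ψ} = det M: the Berezin integral extracts the coefficient of the top monomial.) -/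
open ExteriorAlgebra

/-!
Put `cᵢ = Σⱼ Mᵢⱼ aⱼ`, so that `ω = Σᵢ bᵢ ∧ cᵢ` is a sum of `n` pairwise commuting elements of
square zero; expanding `ω ^ n` only leaves `n!` copies of `b₁ ∧ c₁ ∧ ⋯ ∧ bₙ ∧ cₙ`. Moving all
the `bᵢ` to the front turns this product into `± (b₁ ∧ ⋯ ∧ bₙ) ∧ (c₁ ∧ ⋯ ∧ cₙ)`, with a sign
depending only on `n`, and `c₁ ∧ ⋯ ∧ cₙ = det M • (a₁ ∧ ⋯ ∧ aₙ)`. Undoing the rearrangement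
cancels the sign.
-/

section CommutingSquareZero

variable {A : Type*} [Semiring A]

theorem add_pow_succ_of_commute_of_mul_self_eq_zero {x y : A} (hxy : Commute x y)
    (hx : x * x = 0) (k : ℕ) :
    (x + y) ^ (k + 1) = y ^ (k + 1) + (k + 1) • (x * y ^ k) := by
  induction k with
  | zero => simp [add_comm]
  | succ k ih =>
    have hx_mul : x * (x * y ^ k) = 0 := by rw [← mul_assoc, hx, zero_mul]
    have hy_mul : y * (x * y ^ k) = x * y ^ (k + 1) := by
      rw [← mul_assoc, ← hxy.eq, mul_assoc, ← pow_succ']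
    rw [pow_succ', ih, add_mul, mul_add, mul_add, mul_smul_comm, mul_smul_comm, hx_mul, hy_mul,
      smul_zero, add_zero, ← pow_succ', add_left_comm, succ_nsmul' _ (k + 1)]

theorem noncommProd_mul_eq_zero_of_mul_self_eq_zero {α : Type*} {s : Finset α} {x : α → A}
    (comm : (s : Set α).Pairwise (Function.onFun Commute x)) {i : α} (hi : i ∈ s)
    (hx : x i * x i = 0) : s.noncommProd x comm * x i = 0 := by
  classical
  rw [← s.noncommProd_erase_mul hi x comm, mul_assoc, hx, mul_zero]

theorem sum_pow_card_eq_factorial_smul_noncommProd {α : Type*} (s : Finset α) (x : α → A)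
    (comm : (s : Set α).Pairwise (Function.onFun Commute x)) (hx : ∀ i ∈ s, x i * x i = 0) :
    (∑ i ∈ s, x i) ^ s.card = s.card.factorial • s.noncommProd x comm := by
  induction s using Finset.cons_induction with
  | empty => simp
  | cons i s hi ih =>
    have comm_s : (s : Set α).Pairwise (Function.onFun Commute x) :=
      comm.mono (by simp)
    have hx_s : ∀ j ∈ s, x j * x j = 0 := fun j hj => hx j (Finset.mem_cons_of_mem hj)
    have commute_sum : Commute (x i) (∑ j ∈ s, x j) :=
      Commute.sum_right _ _ _ fun j hj =>
        comm (by simp) (by simp [hj]) (ne_of_mem_of_not_mem hj hi).symm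
    have sum_pow_succ_eq_zero : (∑ j ∈ s, x j) ^ (s.card + 1) = 0 := by
      rw [pow_succ, ih comm_s hx_s, smul_mul_assoc, Finset.mul_sum,
        Finset.sum_eq_zero fun j hj =>
          noncommProd_mul_eq_zero_of_mul_self_eq_zero comm_s hj (hx_s j hj), smul_zero]
    rw [Finset.sum_cons, Finset.card_cons, Finset.noncommProd_cons,
      add_pow_succ_of_commute_of_mul_self_eq_zero commute_sum (hx i (Finset.mem_cons_self i s)),
      sum_pow_succ_eq_zero, zero_add, ih comm_s hx_s, mul_smul_comm, smul_smul,
      Nat.factorial_succ]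

theorem sum_pow_eq_factorial_smul_prod_ofFn {n : ℕ} (x : Fin n → A)
    (comm : ∀ i j, Commute (x i) (x j)) (hx : ∀ i, x i * x i = 0) :
    (∑ i, x i) ^ n = n.factorial • (List.ofFn x).prod := by
  have sum_pow := sum_pow_card_eq_factorial_smul_noncommProd (List.finRange n).toFinset x
    (Set.pairwise_of_forall _ _ comm) fun i _ => hx i
  rwa [Finset.noncommProd_toFinset _ _ _ (List.nodup_finRange n), ← List.ofFn_eq_map,
    List.toFinset_finRange, Finset.card_fin] at sum_pow

end CommutingSquareZero

theorem alternatingMap_apply_sum_smul {R V N α : Type*} [CommRing R] [AddCommGroup V] [Module R V]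
    [AddCommGroup N] [Module R N] [Fintype α] [DecidableEq α] (f : V [⋀^α]→ₗ[R] N)
    (M : Matrix α α R) (v : α → V) :
    f (fun i => ∑ j, M i j • v j) = M.det • f v := by
  have comp_eq : f.compLinearMap (Fintype.linearCombination R v) =
      (LinearMap.toSpanSingleton R N (f v)).compAlternatingMap (Pi.basisFun R α).det := by
    refine (Pi.basisFun R α).ext_alternating fun g hg => ?_
    let σ : Equiv.Perm α := Equiv.ofBijective g (Finite.injective_iff_bijective.1 hg)
    change f.compLinearMap _ (Pi.basisFun R α ∘ σ) =
      LinearMap.compAlternatingMap _ _ (Pi.basisFun R α ∘ σ)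
    rw [AlternatingMap.map_perm, AlternatingMap.map_perm]
    simp only [AlternatingMap.compLinearMap_apply, LinearMap.compAlternatingMap_apply,
      Module.Basis.det_self, LinearMap.toSpanSingleton_apply, one_smul, Pi.basisFun_apply,
      Fintype.linearCombination_apply_single]
  rw [Pi.basisFun_det] at comp_eq
  exact DFunLike.congr_fun comp_eq M

section GeneratorPairs

variable {R V : Type*} [CommRing R] [AddCommGroup V] [Module R V]

theorem ι_mul_ι_eq_neg (u v : V) : ι R u * ι R v = -(ι R v * ι R u) :=
  eq_neg_of_add_eq_zero_left (ι_add_mul_swap u v)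

theorem commute_ι_ι_mul_ι (u v w : V) : Commute (ι R u) (ι R v * ι R w) := by
  rw [commute_iff_eq, ← mul_assoc, ι_mul_ι_eq_neg u v, neg_mul, mul_assoc, ι_mul_ι_eq_neg u w,
    mul_neg, neg_neg, mul_assoc]

theorem commute_ι_mul_ι (u v w z : V) : Commute (ι R u * ι R v) (ι R w * ι R z) :=
  (commute_ι_ι_mul_ι u w z).mul_left (commute_ι_ι_mul_ι v w z)

theorem ι_mul_ι_mul_self_eq_zero (u v : V) : (ι R u * ι R v) * (ι R u * ι R v) = 0 := by
  rw [mul_assoc, (commute_ι_ι_mul_ι v u v).eq, mul_assoc, ι_sq_zero, mul_zero, mul_zero]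

theorem ι_mul_ιMulti {n : ℕ} (u : V) (v : Fin n → V) :
    ι R u * ιMulti R n v = (-1 : R) ^ n • (ιMulti R n v * ι R u) := by
  induction n with
  | zero => simp
  | succ n ih =>
    rw [ιMulti_succ_apply, ← mul_assoc, ι_mul_ι_eq_neg, neg_mul, mul_assoc, ih, mul_smul_comm,
      ← neg_smul, pow_succ', neg_one_mul, mul_assoc]

theorem prod_ofFn_ι_mul_ι {n : ℕ} (b c : Fin n → V) :
    (List.ofFn fun i => ι R (b i) * ι R (c i)).prod =
      (-1 : R) ^ n.choose 2 • (ιMulti R n b * ιMulti R n c) := by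
  induction n with
  | zero => simp
  | succ n ih =>
    calc (List.ofFn fun i => ι R (b i) * ι R (c i)).prod
        = ι R (b 0) * ι R (c 0) * ((-1 : R) ^ n.choose 2 •
            (ιMulti R n (Matrix.vecTail b) * ιMulti R n (Matrix.vecTail c))) := by
          rw [List.ofFn_succ, List.prod_cons]
          exact congrArg _ (ih (Matrix.vecTail b) (Matrix.vecTail c))
      _ = (-1 : R) ^ n.choose 2 • (ι R (b 0) *
            (ι R (c 0) * ιMulti R n (Matrix.vecTail b)) * ιMulti R n (Matrix.vecTail c)) := by
          simp only [mul_smul_comm, mul_assoc]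
      _ = (-1 : R) ^ (n.choose 2 + n) • (ι R (b 0) * ιMulti R n (Matrix.vecTail b) *
            (ι R (c 0) * ιMulti R n (Matrix.vecTail c))) := by
          simp only [ι_mul_ιMulti (c 0), mul_smul_comm, smul_mul_assoc, smul_smul, pow_add,
            mul_assoc]
      _ = (-1 : R) ^ (n + 1).choose 2 • (ιMulti R (n + 1) b * ιMulti R (n + 1) c) := by
          rw [Nat.choose_succ_succ' n 1, Nat.choose_one_right, add_comm (n.choose 2),
            ιMulti_succ_apply, ιMulti_succ_apply]

theorem prod_ofFn_ι_mul_ι_sum_smul {n : ℕ} (M : Matrix (Fin n) (Fin n) R) (b a : Fin n → V) :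
    (List.ofFn fun i => ι R (b i) * ι R (∑ j, M i j • a j)).prod =
      M.det • (List.ofFn fun i => ι R (b i) * ι R (a i)).prod := by
  rw [prod_ofFn_ι_mul_ι, prod_ofFn_ι_mul_ι, alternatingMap_apply_sum_smul, mul_smul_comm,
    smul_comm M.det]

theorem fermionic_gaussian_integral_general {n : ℕ} (M : Matrix (Fin n) (Fin n) R)
    (b a : Fin n → V) :
    (∑ i, ∑ j, M i j • (ι R (b i) * ι R (a j))) ^ n =
      ((n.factorial : R) * M.det) • (List.ofFn fun i => ι R (b i) * ι R (a i)).prod := by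
  have sum_eq : ∑ i, ∑ j, M i j • (ι R (b i) * ι R (a j)) =
      ∑ i, ι R (b i) * ι R (∑ j, M i j • a j) := by
    simp only [map_sum, map_smul, Finset.mul_sum, mul_smul_comm]
  rw [sum_eq, sum_pow_eq_factorial_smul_prod_ofFn _ (fun _ _ => commute_ι_mul_ι _ _ _ _)
      (fun _ => ι_mul_ι_mul_self_eq_zero _ _),
    prod_ofFn_ι_mul_ι_sum_smul, mul_smul, Nat.cast_smul_eq_nsmul]

end GeneratorPairs

/-- The exterior-algebra form of the fermionic Gaussian integral
`∫ dψ dψ̄ e^{ψ̄ M ψ} = det M`: for `ω = Σ_{i,j} M i j • (b i ∧ a j)` in the exterior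
algebra on a space with basis `b_1, …, b_n, a_1, …, a_n`, we have
`ω ^ n = n! · det M · (b_1 ∧ a_1 ∧ ⋯ ∧ b_n ∧ a_n)`. -/
theorem fermionic_gaussian_integral
    (K : Type*) [Field K] [CharZero K] (n : ℕ) (hn : 1 ≤ n)
    (M : Matrix (Fin n) (Fin n) K)
    (b a : Fin n → ((Fin n ⊕ Fin n) → K))
    (hb : ∀ i, b i = Pi.single (Sum.inl i) 1)
    (ha : ∀ i, a i = Pi.single (Sum.inr i) 1)
    (ω : ExteriorAlgebra K ((Fin n ⊕ Fin n) → K))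
    (hω : ω = ∑ i : Fin n, ∑ j : Fin n,
        M i j • (ι K (b i) * ι K (a j))) :
    ω ^ n = ((n.factorial : K) * M.det) •
      ((List.finRange n).map (fun i => ι K (b i) * ι K (a i))).prod := by
  simpa only [hω, List.ofFn_eq_map] using fermionic_gaussian_integral_general M b a
end

section
/- Let n ≥ 1, N ≥ 1, l > 0, and set Δt = l/N. For i = 0, …, N−1 let S_i and R_i be real orthogonal n × n matrices, and let φ_0, φ_N ∈ ℝ^n. Then (2πΔt)^{−Nn/2} ∫_{(ℝ^n)^{N−1}} exp(−(1/(2Δt)) Σ_{i=0}^{N−1} ‖S_i φ_i − R_i φ_{i+1}‖²) dφ_1 ⋯ dφ_{N−1} = (2πl)^{−n/2} exp(−(1/(2l)) ‖G_{N−1} G_{N−2} ⋯ G_0 φ_0 − φ_N‖²), where G_i = R_iᵀ S_i. (This is the triangulation independence of the scalar-field state sum on an interval of length l triangulated with N edges: the result depends only on l and the total holonomy G_{N−1}⋯G_0, not on N.) -/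
open Real MeasureTheory Matrix

/-- The sequence of vertex variables `φ_0, φ_1, …, φ_N` on the interval, where the
boundary values `φ_0` and `φ_N` are fixed and the interior values are given by `ψ`. -/
noncomputable def vertexField (n N : ℕ) (φ₀ φN : Fin n → ℝ)
    (ψ : Fin (N - 1) → Fin n → ℝ) (i : Fin (N + 1)) : Fin n → ℝ :=
  if _h0 : (i : ℕ) = 0 then φ₀
  else if _hN : (i : ℕ) = N then φN
  else ψ ⟨(i : ℕ) - 1, by have := i.isLt; omega⟩

/-!
Up to normalisation each edge contributes a heat kernel `K_Δt(S_i φ_i, R_i φ_{i+1})`, which by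
orthogonal invariance equals `K_Δt(G_i φ_i, φ_{i+1})`. If `A` is orthogonal, the semigroup law gives
`∫ K_s(x, y) K_t(A y, z) dy = K_{s+t}(x, Aᵀ z) = K_{s+t}(A x, z)`. Integrating out the interior
vertices one at a time, starting next to `φ_0`, therefore adds the edge lengths and multiplies the
transporters.
-/

open ProbabilityTheory
open scoped NNReal ENNReal

section Orthogonal

variable {ι K : Type*} [Fintype ι] [DecidableEq ι] [CommRing K] {A B : Matrix ι ι K}

lemma sum_mulVec_sq_of_mem_orthogonalGroup (hA : A ∈ orthogonalGroup ι K) (v : ι → K) :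
    ∑ k, (A *ᵥ v) k ^ 2 = ∑ k, v k ^ 2 := by
  have : A *ᵥ v ⬝ᵥ A *ᵥ v = v ⬝ᵥ v := by
    rw [dotProduct_mulVec, ← mulVec_transpose, mulVec_mulVec, (mem_orthogonalGroup_iff' _ _).1 hA,
      one_mulVec]
  simpa only [dotProduct, ← sq] using this

lemma transpose_mul_mem_orthogonalGroup (hA : A ∈ orthogonalGroup ι K)
    (hB : B ∈ orthogonalGroup ι K) : Aᵀ * B ∈ orthogonalGroup ι K :=
  mul_mem ((mem_orthogonalGroup_iff' _ _).2 <| by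
    rw [transpose_transpose, (mem_orthogonalGroup_iff _ _).1 hA]) hB

end Orthogonal

lemma inv_sqrt_pow_eq_rpow {x : ℝ} (hx : 0 ≤ x) (d : ℕ) :
    (√x)⁻¹ ^ d = x ^ (-(d : ℝ) / 2) := by
  rw [← sqrt_inv, sqrt_eq_rpow, ← rpow_mul_natCast (inv_nonneg.2 hx), inv_rpow hx, ← rpow_neg hx]
  congr 1
  ring

section HeatKernel

variable {ι : Type*} [Fintype ι]

/-- The Euclidean heat kernel at time `t`, normalised as the transition density of Brownian motion
(generator `Δ / 2`). It is `ℝ≥0∞`-valued so that Tonelli's theorem applies without integrability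
side conditions; at `t = 0` it is `0` when `ι` is nonempty, rather than a Dirac mass. -/
noncomputable def heatKernel (t : ℝ≥0) (x y : ι → ℝ) : ℝ≥0∞ :=
  ∏ k, gaussianPDF (x k) t (y k)

lemma heatKernel_eq_ofReal_exp (t : ℝ≥0) (x y : ι → ℝ) :
    heatKernel t x y = ENNReal.ofReal ((2 * π * t) ^ (-(Fintype.card ι : ℝ) / 2) *
      exp (-(1 / (2 * t)) * ∑ k, (x k - y k) ^ 2)) := by
  have exponent (k : ι) : -(y k - x k) ^ 2 / (2 * t) = -(1 / (2 * t)) * (x k - y k) ^ 2 := by ring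
  simp only [heatKernel, gaussianPDF]
  rw [← ENNReal.ofReal_prod_of_nonneg fun _ _ ↦ gaussianPDFReal_nonneg _ _ _]
  simp only [gaussianPDFReal, exponent, Finset.prod_mul_distrib, Finset.prod_const,
    Finset.card_univ, ← exp_sum, ← Finset.mul_sum]
  rw [inv_sqrt_pow_eq_rpow (by positivity)]

lemma toReal_heatKernel (t : ℝ≥0) (x y : ι → ℝ) :
    (heatKernel t x y).toReal = (2 * π * t) ^ (-(Fintype.card ι : ℝ) / 2) *
      exp (-(1 / (2 * t)) * ∑ k, (x k - y k) ^ 2) := by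
  rw [heatKernel_eq_ofReal_exp, ENNReal.toReal_ofReal (by positivity)]

lemma heatKernel_lt_top (t : ℝ≥0) (x y : ι → ℝ) : heatKernel t x y < ∞ :=
  ENNReal.prod_lt_top fun _ _ ↦ gaussianPDF_lt_top

@[fun_prop]
lemma measurable_heatKernel {α : Type*} [MeasurableSpace α] (t : ℝ≥0) {f g : α → ι → ℝ}
    (hf : Measurable f) (hg : Measurable g) : Measurable fun a ↦ heatKernel t (f a) (g a) := by
  unfold heatKernel gaussianPDF gaussianPDFReal
  fun_prop

lemma heatKernel_comm (t : ℝ≥0) (x y : ι → ℝ) : heatKernel t x y = heatKernel t y x := by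
  simp only [heatKernel_eq_ofReal_exp, sub_sq_comm]

lemma lintegral_heatKernel_eq_one {t : ℝ≥0} (ht : t ≠ 0) (x : ι → ℝ) :
    ∫⁻ y, heatKernel t x y = 1 := by
  simp only [heatKernel, gaussianPDF]
  simp_rw [← ENNReal.ofReal_prod_of_nonneg fun _ _ ↦ gaussianPDFReal_nonneg _ _ _]
  rw [← ofReal_integral_eq_lintegral_ofReal (μ := volume)
      (Integrable.fintype_prod fun k ↦ integrable_gaussianPDFReal (x k) t)
      (ae_of_all _ fun _ ↦ Finset.prod_nonneg fun _ _ ↦ gaussianPDFReal_nonneg _ _ _),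
    integral_fintype_prod_volume_eq_prod fun k ↦ gaussianPDFReal (x k) t]
  simp only [integral_gaussianPDFReal_eq_one _ ht, Finset.prod_const_one, ENNReal.ofReal_one]

-- Completing the square in `y`; the second factor is the density of a Brownian bridge.
lemma gaussianPDFReal_mul_gaussianPDFReal {s t : ℝ≥0} (hs : s ≠ 0) (ht : t ≠ 0) (x y z : ℝ) :
    gaussianPDFReal x s y * gaussianPDFReal y t z =
      gaussianPDFReal x (s + t) z *
        gaussianPDFReal ((t * x + s * z) / (s + t)) (s * t / (s + t)) y := by
  simp only [gaussianPDFReal, NNReal.coe_add, NNReal.coe_mul, NNReal.coe_div]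
  rw [mul_mul_mul_comm, mul_mul_mul_comm (√(2 * π * (s + t)))⁻¹, ← exp_add, ← exp_add]
  congr 1
  · rw [← mul_inv, ← mul_inv, ← sqrt_mul (by positivity), ← sqrt_mul (by positivity)]
    congr 2
    field_simp
  · congr 1
    field_simp
    ring

lemma heatKernel_mul_heatKernel {s t : ℝ≥0} (hs : s ≠ 0) (ht : t ≠ 0) (x y z : ι → ℝ) :
    heatKernel s x y * heatKernel t y z =
      heatKernel (s + t) x z *
        heatKernel (s * t / (s + t)) (fun k ↦ (t * x k + s * z k) / (s + t)) y := by
  simp only [heatKernel, ← Finset.prod_mul_distrib, gaussianPDF,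
    ← ENNReal.ofReal_mul (gaussianPDFReal_nonneg _ _ _), gaussianPDFReal_mul_gaussianPDFReal hs ht]

theorem lintegral_heatKernel_mul_heatKernel {s t : ℝ≥0} (hs : s ≠ 0) (ht : t ≠ 0) (x z : ι → ℝ) :
    ∫⁻ y, heatKernel s x y * heatKernel t y z = heatKernel (s + t) x z := by
  have bridge_time_ne_zero : s * t / (s + t) ≠ 0 := by positivity
  simp only [heatKernel_mul_heatKernel hs ht]
  rw [lintegral_const_mul _ (by fun_prop), lintegral_heatKernel_eq_one bridge_time_ne_zero, mul_one]

variable [DecidableEq ι] {A : Matrix ι ι ℝ}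

lemma heatKernel_mulVec_mulVec (hA : A ∈ orthogonalGroup ι ℝ) (t : ℝ≥0) (x y : ι → ℝ) :
    heatKernel t (A *ᵥ x) (A *ᵥ y) = heatKernel t x y := by
  simp only [heatKernel_eq_ofReal_exp, ← Pi.sub_apply, ← mulVec_sub,
    sum_mulVec_sq_of_mem_orthogonalGroup hA]

lemma heatKernel_mulVec_left (hA : A ∈ orthogonalGroup ι ℝ) (t : ℝ≥0) (x y : ι → ℝ) :
    heatKernel t (A *ᵥ x) y = heatKernel t x (Aᵀ *ᵥ y) := by
  rw [← heatKernel_mulVec_mulVec hA t x, mulVec_mulVec, (mem_orthogonalGroup_iff _ _).1 hA,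
    one_mulVec]

lemma heatKernel_mulVec_right (hA : A ∈ orthogonalGroup ι ℝ) (t : ℝ≥0) (x y : ι → ℝ) :
    heatKernel t x (A *ᵥ y) = heatKernel t (Aᵀ *ᵥ x) y := by
  rw [heatKernel_comm, heatKernel_mulVec_left hA, heatKernel_comm]

theorem lintegral_heatKernel_mul_heatKernel_mulVec {s t : ℝ≥0} (hs : s ≠ 0) (ht : t ≠ 0)
    (hA : A ∈ orthogonalGroup ι ℝ) (x z : ι → ℝ) :
    ∫⁻ y, heatKernel s x y * heatKernel t (A *ᵥ y) z = heatKernel (s + t) (A *ᵥ x) z := by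
  simp only [heatKernel_mulVec_left hA, lintegral_heatKernel_mul_heatKernel hs ht]

end HeatKernel

section Holonomy

variable {M : Type*} [Monoid M]

/-- The holonomy `g (N - 1) * ⋯ * g 1 * g 0` of the transporters `g i` along consecutive edges, the
first edge acting first. -/
def holonomy {N : ℕ} (g : Fin N → M) : M :=
  ((List.finRange N).reverse.map g).prod

lemma holonomy_one (g : Fin 1 → M) : holonomy g = g 0 := by
  simp [holonomy, List.finRange_succ]

lemma holonomy_succ {N : ℕ} (g : Fin (N + 1) → M) :
    holonomy g = g (Fin.last N) * holonomy fun i ↦ g i.castSucc := by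
  simp [holonomy, List.finRange_succ_last, List.map_reverse, Function.comp_def]

end Holonomy

lemma lintegral_pi_eq_lintegral_snoc {E : Type*} [MeasureSpace E] [SigmaFinite (volume : Measure E)]
    {m : ℕ} {f : (Fin (m + 1) → E) → ℝ≥0∞} (hf : Measurable f) :
    ∫⁻ ψ, f ψ = ∫⁻ x, ∫⁻ ψ : Fin m → E, f (Fin.snoc ψ x) := by
  have snoc_preserving :=
    (volume_preserving_piFinSuccAbove (fun _ : Fin (m + 1) ↦ E) (Fin.last m)).symm
  have snoc_eq (p : E × (Fin m → E)) :
      (MeasurableEquiv.piFinSuccAbove (fun _ ↦ E) (Fin.last m)).symm p = Fin.snoc p.2 p.1 := by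
    simp [MeasurableEquiv.piFinSuccAbove_symm_apply, Fin.insertNthEquiv]
  rw [← snoc_preserving.lintegral_comp hf, Measure.volume_eq_prod]
  simp only [snoc_eq]
  exact lintegral_prod _ (by simpa only [Function.comp_def, snoc_eq] using
    (hf.comp snoc_preserving.measurable).aemeasurable)

section StateSum

variable {n m : ℕ}

lemma vertexField_last (a b : Fin n → ℝ) (ψ : Fin m → Fin n → ℝ) :
    vertexField n (m + 1) a b ψ (Fin.last (m + 1)) = b := by
  simp [vertexField]

lemma vertexField_snoc_castSucc (a b x : Fin n → ℝ) (ψ : Fin m → Fin n → ℝ) (i : Fin (m + 2)) :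
    vertexField n (m + 2) a b (Fin.snoc ψ x : Fin (m + 1) → Fin n → ℝ) i.castSucc =
      vertexField n (m + 1) a x ψ i := by
  by_cases h0 : (i : ℕ) = 0
  · simp [vertexField, h0]
  by_cases hlast : (i : ℕ) = m + 1
  · simp [vertexField, hlast, Fin.snoc]
  · have interior : (i : ℕ) - 1 < m := by omega
    have not_final : (i : ℕ) ≠ m + 2 := by omega
    simp [vertexField, h0, hlast, not_final, Fin.snoc, interior]

@[fun_prop]
lemma measurable_vertexField (a b : Fin n → ℝ) (i : Fin (m + 2)) :
    Measurable fun ψ : Fin m → Fin n → ℝ ↦ vertexField n (m + 1) a b ψ i := by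
  unfold vertexField
  split_ifs <;> fun_prop

/-- The integrand of the state sum on `m + 1` edges: edge `i` contributes the heat kernel at time
`τ i` from `G i *ᵥ φ i` to `φ (i + 1)`, where `φ 0 = a`, `φ (m + 1) = b` and `ψ` lists the interior
vertex variables. -/
noncomputable def stateWeight (τ : Fin (m + 1) → ℝ≥0) (G : Fin (m + 1) → Matrix (Fin n) (Fin n) ℝ)
    (a b : Fin n → ℝ) (ψ : Fin m → Fin n → ℝ) : ℝ≥0∞ :=
  ∏ i, heatKernel (τ i) (G i *ᵥ vertexField n (m + 1) a b ψ i.castSucc)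
    (vertexField n (m + 1) a b ψ i.succ)

lemma measurable_stateWeight (τ : Fin (m + 1) → ℝ≥0) (G : Fin (m + 1) → Matrix (Fin n) (Fin n) ℝ)
    (a b : Fin n → ℝ) : Measurable (stateWeight τ G a b) := by
  have measurable_mulVec (i : Fin (m + 1)) : Measurable (G i).mulVec :=
    (continuous_const.matrix_mulVec continuous_id).measurable
  unfold stateWeight
  fun_prop

lemma stateWeight_lt_top (τ : Fin (m + 1) → ℝ≥0) (G : Fin (m + 1) → Matrix (Fin n) (Fin n) ℝ)
    (a b : Fin n → ℝ) (ψ : Fin m → Fin n → ℝ) : stateWeight τ G a b ψ < ∞ :=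
  ENNReal.prod_lt_top fun _ _ ↦ heatKernel_lt_top _ _ _

lemma stateWeight_fin_zero (τ : Fin 1 → ℝ≥0) (G : Fin 1 → Matrix (Fin n) (Fin n) ℝ)
    (a b : Fin n → ℝ) (ψ : Fin 0 → Fin n → ℝ) :
    stateWeight τ G a b ψ = heatKernel (τ 0) (G 0 *ᵥ a) b := by
  simp [stateWeight, vertexField]

lemma stateWeight_snoc (τ : Fin (m + 2) → ℝ≥0) (G : Fin (m + 2) → Matrix (Fin n) (Fin n) ℝ)
    (a b x : Fin n → ℝ) (ψ : Fin m → Fin n → ℝ) :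
    stateWeight τ G a b (Fin.snoc ψ x : Fin (m + 1) → Fin n → ℝ) =
      stateWeight (fun i ↦ τ i.castSucc) (fun i ↦ G i.castSucc) a x ψ *
        heatKernel (τ (Fin.last _)) (G (Fin.last _) *ᵥ x) b := by
  simp only [stateWeight, Fin.prod_univ_castSucc (n := m + 1), Fin.succ_castSucc, Fin.succ_last,
    vertexField_snoc_castSucc, vertexField_last]

theorem lintegral_stateWeight {τ : Fin (m + 1) → ℝ≥0} (hτ : ∀ i, τ i ≠ 0)
    {G : Fin (m + 1) → Matrix (Fin n) (Fin n) ℝ} (hG : ∀ i, G i ∈ orthogonalGroup (Fin n) ℝ)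
    (a b : Fin n → ℝ) :
    ∫⁻ ψ, stateWeight τ G a b ψ = heatKernel (∑ i, τ i) (holonomy G *ᵥ a) b := by
  induction m generalizing b with
  | zero =>
    rw [show ∑ i, τ i = τ 0 from Fin.sum_univ_one τ, holonomy_one]
    simp only [stateWeight_fin_zero, lintegral_const, volume_pi, Measure.pi_empty_univ, mul_one]
  | succ m ih =>
    have initial_length_ne_zero : ∑ i : Fin (m + 1), τ i.castSucc ≠ 0 := by
      simp [Finset.sum_eq_zero_iff, hτ]
    calc ∫⁻ ψ, stateWeight τ G a b ψ
      _ = ∫⁻ x, (∫⁻ ψ, stateWeight (fun i ↦ τ i.castSucc) (fun i ↦ G i.castSucc) a x ψ) *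
            heatKernel (τ (Fin.last _)) (G (Fin.last _) *ᵥ x) b := by
        rw [lintegral_pi_eq_lintegral_snoc (measurable_stateWeight τ G a b)]
        simp only [stateWeight_snoc, lintegral_mul_const _ (measurable_stateWeight _ _ _ _)]
      _ = ∫⁻ x, heatKernel (∑ i : Fin (m + 1), τ i.castSucc)
              (holonomy (fun i : Fin (m + 1) ↦ G i.castSucc) *ᵥ a) x *
            heatKernel (τ (Fin.last _)) (G (Fin.last _) *ᵥ x) b := by
        simp only [ih (fun i ↦ hτ i.castSucc) (fun i ↦ hG i.castSucc)]
      _ = heatKernel (∑ i, τ i) (holonomy G *ᵥ a) b := by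
        rw [lintegral_heatKernel_mul_heatKernel_mulVec initial_length_ne_zero (hτ _) (hG _),
          mulVec_mulVec, ← holonomy_succ, ← Fin.sum_univ_castSucc]

lemma toReal_stateWeight (τ : Fin (m + 1) → ℝ≥0) (S : Fin (m + 1) → Matrix (Fin n) (Fin n) ℝ)
    {R : Fin (m + 1) → Matrix (Fin n) (Fin n) ℝ} (hR : ∀ i, R i ∈ orthogonalGroup (Fin n) ℝ)
    (a b : Fin n → ℝ) (ψ : Fin m → Fin n → ℝ) :
    (stateWeight τ (fun i ↦ (R i)ᵀ * S i) a b ψ).toReal =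
      (∏ i, (2 * π * τ i) ^ (-(n : ℝ) / 2)) *
        exp (∑ i, -(1 / (2 * τ i)) * ∑ k,
          ((S i *ᵥ vertexField n (m + 1) a b ψ i.castSucc) k
            - (R i *ᵥ vertexField n (m + 1) a b ψ i.succ) k) ^ 2) := by
  simp only [stateWeight, ← mulVec_mulVec, ← heatKernel_mulVec_right (hR _), ENNReal.toReal_prod,
    toReal_heatKernel, Fintype.card_fin, Finset.prod_mul_distrib, exp_sum]

end StateSum

theorem scalar_state_sum_interval_general
    (n N : ℕ) (hN : 1 ≤ N) (τ : Fin N → ℝ) (hτ : ∀ i, 0 < τ i)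
    (S R : Fin N → Matrix (Fin n) (Fin n) ℝ)
    (hS : ∀ i, (S i)ᵀ * S i = 1) (hR : ∀ i, (R i)ᵀ * R i = 1)
    (φ₀ φN : Fin n → ℝ) :
    (∏ i, (2 * π * τ i) ^ (-(n : ℝ) / 2)) *
      ∫ ψ : Fin (N - 1) → Fin n → ℝ,
        exp (∑ i, -(1 / (2 * τ i)) * ∑ k,
          ((S i *ᵥ vertexField n N φ₀ φN ψ i.castSucc) k
            - (R i *ᵥ vertexField n N φ₀ φN ψ i.succ) k) ^ 2)
    = (2 * π * ∑ i, τ i) ^ (-(n : ℝ) / 2) *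
        exp (-(1 / (2 * ∑ i, τ i)) *
          ∑ k, ((holonomy (fun i ↦ (R i)ᵀ * S i) *ᵥ φ₀) k - φN k) ^ 2) := by
  obtain ⟨m, rfl⟩ := Nat.exists_eq_add_of_le' hN
  lift τ to Fin (m + 1) → ℝ≥0 using fun i ↦ (hτ i).le
  have hR' (i) : R i ∈ orthogonalGroup (Fin n) ℝ := (mem_orthogonalGroup_iff' _ _).2 (hR i)
  have hG (i) : (R i)ᵀ * S i ∈ orthogonalGroup (Fin n) ℝ :=
    transpose_mul_mem_orthogonalGroup (hR' i) ((mem_orthogonalGroup_iff' _ _).2 (hS i))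
  have hτ' (i) : τ i ≠ 0 := (NNReal.coe_pos.1 (hτ i)).ne'
  have state_sum := congrArg ENNReal.toReal (lintegral_stateWeight hτ' hG φ₀ φN)
  rw [← integral_toReal (measurable_stateWeight _ _ _ _).aemeasurable
    (ae_of_all _ (stateWeight_lt_top _ _ _ _))] at state_sum
  simp only [toReal_stateWeight τ S hR', integral_const_mul, toReal_heatKernel, Fintype.card_fin,
    NNReal.coe_sum] at state_sum
  exact state_sum

/-- Triangulation independence of the scalar-field state sum on an interval of length `l`
triangulated with `N` edges: integrating out the interior vertex variables gives
`(2πl)^{-n/2} exp(-‖G_{N-1}⋯G_0 φ_0 - φ_N‖²/(2l))` with `G_i = R_iᵀ S_i`, independently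
of `N`. -/
theorem scalar_state_sum_interval
    (n N : ℕ) (hn : 1 ≤ n) (hN : 1 ≤ N) (l : ℝ) (hl : 0 < l)
    (Δt : ℝ) (hΔt : Δt = l / N)
    (S R : Fin N → Matrix (Fin n) (Fin n) ℝ)
    (hS : ∀ i, (S i)ᵀ * S i = 1) (hR : ∀ i, (R i)ᵀ * R i = 1)
    (φ₀ φN : Fin n → ℝ)
    (G : Matrix (Fin n) (Fin n) ℝ)
    (hG : G = ((List.finRange N).reverse.map (fun i => (R i)ᵀ * S i)).prod) :
    (2 * π * Δt) ^ (-(N * n : ℝ) / 2) *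
      ∫ ψ : Fin (N - 1) → Fin n → ℝ,
        Real.exp (-(1 / (2 * Δt)) * ∑ i : Fin N, ∑ k,
          ((S i).mulVec (vertexField n N φ₀ φN ψ i.castSucc) k
            - (R i).mulVec (vertexField n N φ₀ φN ψ i.succ) k) ^ 2)
    = (2 * π * l) ^ (-(n : ℝ) / 2) *
        Real.exp (-(1 / (2 * l)) * ∑ k, (G.mulVec φ₀ k - φN k) ^ 2) := by
  have hΔt_pos : 0 < Δt := by rw [hΔt]; positivity
  have total_length : ∑ _ : Fin N, Δt = l := by
    rw [Fin.sum_const, nsmul_eq_mul, hΔt]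
    field_simp
  have normalization : (2 * π * Δt) ^ (-(N * n : ℝ) / 2) =
      ∏ _ : Fin N, (2 * π * Δt) ^ (-(n : ℝ) / 2) := by
    rw [Fin.prod_const, ← rpow_mul_natCast (by positivity), mul_comm (N : ℝ), ← neg_mul,
      mul_div_right_comm]
  rw [normalization, show G = holonomy fun i ↦ (R i)ᵀ * S i from hG]
  simpa only [total_length, Finset.mul_sum] using
    scalar_state_sum_interval_general n N hN (fun _ ↦ Δt) (fun _ ↦ hΔt_pos) S R hS hR φ₀ φN
end

section
/- Let n ≥ 1, l > 0, and let Q_1, Q_2 be real orthogonal n × n matrices with det(Q_1 − Q_2) ≠ 0. Then (2πl)^{−n/2} ∫_{ℝ^n} exp(−(1/(2l)) ‖Q_1 φ − Q_2 φ‖²) dφ = 1/|det(Q_1 − Q_2)|, where the integral is the Lebesgue integral over ℝ^n. (This is the partition function of the scalar-field state sum model on the circle; it is independent of the length l and of the triangulation.) -/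
open Real MeasureTheory Matrix

/-!
The integrand is the centred Gaussian `ψ ↦ exp (-‖ψ‖² / (2l))` evaluated at `ψ = (Q₁ - Q₂) φ`.
This linear change of variables contributes the factor `|det (Q₁ - Q₂)|⁻¹`, and the remaining
Gaussian integral `(2πl)^(n/2)` cancels the normalization.
-/

section ChangeOfVariables

variable {E F : Type*} [NormedAddCommGroup E] [NormedSpace ℝ E] [FiniteDimensional ℝ E]
  [MeasurableSpace E] [BorelSpace E] (μ : Measure E) [μ.IsAddHaarMeasure]
  [NormedAddCommGroup F] [NormedSpace ℝ F]

theorem integral_comp_linearMap_of_det_ne_zero {T : E →ₗ[ℝ] E} (hT : LinearMap.det T ≠ 0)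
    (g : E → F) :
    ∫ x, g (T x) ∂μ = |LinearMap.det T|⁻¹ • ∫ y, g y ∂μ := by
  have T_ker : LinearMap.ker T = ⊥ :=
    not_not.1 (mt LinearMap.det_eq_zero_iff_ker_ne_bot.2 hT)
  have T_embedding : MeasurableEmbedding T :=
    (LinearMap.isClosedEmbedding_of_injective T_ker).measurableEmbedding
  rw [← T_embedding.integral_map, Measure.map_linearMap_addHaar_eq_smul_addHaar μ hT,
    integral_smul_measure, ENNReal.toReal_ofReal (abs_nonneg _), abs_inv]

end ChangeOfVariables

section Gaussian

variable {ι : Type*} [Fintype ι]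

theorem integral_exp_neg_mul_sum_sq {b : ℝ} (hb : 0 < b) :
    ∫ x : ι → ℝ, exp (-b * ∑ i, x i ^ 2) = (π / b) ^ (Fintype.card ι / 2 : ℝ) := by
  have euclidean := GaussianFourier.integral_rexp_neg_mul_sq_norm (V := EuclideanSpace ℝ ι) hb
  rw [← (PiLp.volume_preserving_toLp ι).integral_comp
    (MeasurableEquiv.toLp 2 _).measurableEmbedding] at euclidean
  simpa only [EuclideanSpace.real_norm_sq_eq, finrank_euclideanSpace] using euclidean

theorem integral_exp_neg_mul_sum_sq_mulVec [DecidableEq ι] {b : ℝ} (hb : 0 < b)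
    {A : Matrix ι ι ℝ} (hA : A.det ≠ 0) :
    ∫ x : ι → ℝ, exp (-b * ∑ i, (A *ᵥ x) i ^ 2) =
      |A.det|⁻¹ * (π / b) ^ (Fintype.card ι / 2 : ℝ) := by
  rw [← integral_exp_neg_mul_sum_sq hb, ← LinearMap.det_toLin' A, ← smul_eq_mul]
  exact integral_comp_linearMap_of_det_ne_zero volume (by rwa [LinearMap.det_toLin'])
    fun y : ι → ℝ ↦ exp (-b * ∑ i, y i ^ 2)

end Gaussian

theorem scalar_state_sum_circle_general {ι : Type*} [Fintype ι] [DecidableEq ι]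
    {l : ℝ} (hl : 0 < l) {A B : Matrix ι ι ℝ} (hdet : (A - B).det ≠ 0) :
    (2 * π * l) ^ (-(Fintype.card ι : ℝ) / 2) *
      ∫ φ : ι → ℝ, exp (-(∑ k, ((A *ᵥ φ) k - (B *ᵥ φ) k) ^ 2) / (2 * l))
    = 1 / |(A - B).det| := by
  have exponent_eq (φ : ι → ℝ) :
      -(∑ k, ((A *ᵥ φ) k - (B *ᵥ φ) k) ^ 2) / (2 * l) =
        -(2 * l)⁻¹ * ∑ k, ((A - B) *ᵥ φ) k ^ 2 := by
    simp only [sub_mulVec, Pi.sub_apply]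
    ring
  have normalization_pos : 0 < 2 * π * l := by positivity
  have normalization_eq : π / (2 * l)⁻¹ = 2 * π * l := by rw [div_inv_eq_mul]; ring
  simp only [exponent_eq]
  rw [integral_exp_neg_mul_sum_sq_mulVec (by positivity) hdet, normalization_eq, mul_left_comm,
    neg_div, ← rpow_add normalization_pos, neg_add_cancel, rpow_zero, mul_one, one_div]

/-- The partition function of the scalar-field state sum model on the circle:
`(2πl)^{-n/2} ∫_{ℝⁿ} e^{-‖Q₁φ - Q₂φ‖²/(2l)} dφ = 1/|det(Q₁ - Q₂)|`, independent of the
length `l` and of the triangulation. -/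
theorem scalar_state_sum_circle
    (n : ℕ) (hn : 1 ≤ n) (l : ℝ) (hl : 0 < l)
    (Q₁ Q₂ : Matrix (Fin n) (Fin n) ℝ)
    (hQ₁ : Q₁ᵀ * Q₁ = 1) (hQ₂ : Q₂ᵀ * Q₂ = 1)
    (hdet : (Q₁ - Q₂).det ≠ 0) :
    (2 * π * l) ^ (-(n : ℝ) / 2) *
      ∫ φ : Fin n → ℝ,
        Real.exp (-(∑ k, (Q₁.mulVec φ k - Q₂.mulVec φ k) ^ 2) / (2 * l))
    = 1 / |(Q₁ - Q₂).det| := by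
  simpa only [Fintype.card_fin] using scalar_state_sum_circle_general hl hdet
end

section
/- Fix a ∈ (0,1) and l > 0, and define G(s) = 2 · (2π/l)^{−2s} · (ζ_H(2s, a) + ζ_H(2s, 1−a)) for complex s, using the analytically continued Hurwitz zeta function. Then G is differentiable at s = 0 and exp(−G′(0)) = (4 sin²(π a))² = 16 sin⁴(π a). (G is the zeta function of the operator L = −d²/dt² − 2A d/dt − A² for a real scalar field minimally coupled to a constant SO(2) gauge field A of holonomy angle 2πa on a circle of circumference l; the eigenvalues of L are (2π(k±a)/l)², k ∈ ℤ, each occurring for two independent eigenfunctions, and the statement computes the zeta-regularised det L, so that the continuum partition function (det L)^{−1/2} equals 1/(4 sin²(πa)), matching the state sum model.) -/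
open HurwitzZeta Complex Real

/-!
Adding `ζ_H(s, a)` and `ζ_H(s, 1 - a)` leaves only the even part of the Hurwitz zeta function,
`∑_{k ∈ ℤ} |k + a| ^ (-s)`. For `a ∉ ℤ` this vanishes at `s = 0`, so the scale `2π / l` drops out
of the determinant, and the functional equation identifies its derivative at `0` with
`C(1) = ∑ cos (2πna) / n`, understood by analytic continuation. Now `C(1)` is the real part of the
polylogarithm `Li₁(z)` at `z = exp (2πia)`. Since `Γ(s) Li_s(z)` is the Mellin transform of
`z / (exp t - z)`, which has the primitive `log (1 - z exp (-t))`, one finds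
`Li₁(z) = -log (1 - z)`, hence `C(1) = -log |1 - z| = -log |2 sin (πa)|`.
-/

open Filter Topology Set
open scoped ComplexConjugate

/-- The Bose–Einstein integrand `z / (exp t - z)` with fugacity `z`, written in terms of `exp (-t)`.
Its Mellin transform at `s` is `Γ(s) Li_s(z)`. -/
noncomputable def boseKernel (z : ℂ) (t : ℝ) : ℂ :=
  z * (rexp (-t) : ℂ) / (1 - z * (rexp (-t) : ℂ))

section BoseKernel

variable {z : ℂ}

lemma one_sub_mem_slitPlane_of_norm_le_one (hz : ‖z‖ ≤ 1) (hz_ne : z ≠ 1) :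
    1 - z ∈ slitPlane := by
  refine mem_slitPlane_iff.2 (or_iff_not_imp_right.2 fun im_eq_zero => ?_)
  have im_eq : z.im = 0 := by simpa using im_eq_zero
  have re_ne : z.re ≠ 1 := fun re_eq => hz_ne (Complex.ext re_eq im_eq)
  have re_lt : z.re < 1 := lt_of_le_of_ne ((re_le_norm z).trans hz) re_ne
  simpa using re_lt

lemma one_sub_mul_exp_neg_mem_slitPlane (hz : 1 - z ∈ slitPlane) {t : ℝ} (ht : 0 ≤ t) :
    1 - z * (rexp (-t) : ℂ) ∈ slitPlane := by
  have hmem : 1 + rexp (-t) • -z ∈ slitPlane :=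
    starConvex_one_slitPlane.add_smul_mem (by rwa [← sub_eq_add_neg]) (Real.exp_pos _).le
      (Real.exp_le_one_iff.2 (neg_nonpos.2 ht))
  rwa [real_smul, mul_neg, ← sub_eq_add_neg, mul_comm] at hmem

lemma tendsto_one_sub_mul_exp_neg_atTop (z : ℂ) :
    Tendsto (fun t : ℝ => 1 - z * (rexp (-t) : ℂ)) atTop (𝓝 1) := by
  have hexp : Tendsto (fun t : ℝ => (rexp (-t) : ℂ)) atTop (𝓝 ((0 : ℝ) : ℂ)) :=
    (continuous_ofReal.tendsto 0).comp tendsto_exp_neg_atTop_nhds_zero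
  simpa using (hexp.const_mul z).const_sub 1

lemma continuousOn_boseKernel (hz : 1 - z ∈ slitPlane) :
    ContinuousOn (boseKernel z) (Ici 0) :=
  ContinuousOn.div (by fun_prop) (by fun_prop) fun _ ht =>
    slitPlane_ne_zero (one_sub_mul_exp_neg_mem_slitPlane hz ht)

lemma locallyIntegrableOn_boseKernel (hz : 1 - z ∈ slitPlane) :
    MeasureTheory.LocallyIntegrableOn (boseKernel z) (Ioi 0) :=
  ((continuousOn_boseKernel hz).mono Ioi_subset_Ici_self).locallyIntegrableOn measurableSet_Ioi

lemma isBigO_boseKernel_atTop (z : ℂ) :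
    boseKernel z =O[atTop] fun t => rexp (-1 * t) := by
  have denominator : (fun t : ℝ => (1 - z * (rexp (-t) : ℂ))⁻¹) =O[atTop] fun _ => (1 : ℝ) :=
    ((tendsto_one_sub_mul_exp_neg_atTop z).inv₀ one_ne_zero).isBigO_one ℝ
  have numerator : (fun t : ℝ => z * (rexp (-t) : ℂ)) =O[atTop] fun t => rexp (-1 * t) :=
    .of_bound ‖z‖ (.of_forall fun t => by rw [norm_mul, norm_real, neg_one_mul])
  simpa only [mul_one] using! numerator.mul denominator

lemma isBigO_boseKernel_nhdsGT_zero (hz : 1 - z ∈ slitPlane) :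
    boseKernel z =O[𝓝[>] 0] fun t => t ^ (-(0 : ℝ)) := by
  simp only [neg_zero, rpow_zero]
  exact ((continuousOn_boseKernel hz 0 self_mem_Ici).mono Ioi_subset_Ici_self).isBigO_one ℝ

lemma mellinConvergent_boseKernel (hz : 1 - z ∈ slitPlane) {s : ℂ} (hs : 0 < s.re) :
    MellinConvergent (boseKernel z) s :=
  mellinConvergent_of_isBigO_rpow_exp one_pos (locallyIntegrableOn_boseKernel hz)
    (isBigO_boseKernel_atTop z) (isBigO_boseKernel_nhdsGT_zero hz) hs

lemma differentiableAt_mellin_boseKernel (hz : 1 - z ∈ slitPlane) {s : ℂ} (hs : 0 < s.re) :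
    DifferentiableAt ℂ (mellin (boseKernel z)) s :=
  mellin_differentiableAt_of_isBigO_rpow_exp one_pos (locallyIntegrableOn_boseKernel hz)
    (isBigO_boseKernel_atTop z) (isBigO_boseKernel_nhdsGT_zero hz) hs

lemma hasDerivAt_log_one_sub_mul_exp_neg (hz : 1 - z ∈ slitPlane) {t : ℝ} (ht : 0 ≤ t) :
    HasDerivAt (fun t : ℝ => Complex.log (1 - z * (rexp (-t) : ℂ))) (boseKernel z t) t := by
  have hexp : HasDerivAt (fun t : ℝ => rexp (-t)) (-rexp (-t)) t := by
    simpa using (hasDerivAt_neg t).exp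
  have hlog := ((hexp.ofReal_comp.const_mul z).const_sub 1).clog_real
    (one_sub_mul_exp_neg_mem_slitPlane hz ht)
  rwa [ofReal_neg, mul_neg, neg_neg] at hlog

lemma mellin_boseKernel_one (hz : 1 - z ∈ slitPlane) :
    mellin (boseKernel z) 1 = -Complex.log (1 - z) := by
  have integrable := mellinConvergent_boseKernel hz (s := 1) (by simp)
  have limit : Tendsto (fun t : ℝ => Complex.log (1 - z * (rexp (-t) : ℂ))) atTop (𝓝 0) := by
    simpa using (tendsto_one_sub_mul_exp_neg_atTop z).clog (by simp)
  simp only [MellinConvergent, sub_self, cpow_zero, one_smul] at integrable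
  simp only [mellin, sub_self, cpow_zero, one_smul]
  rw [MeasureTheory.integral_Ioi_of_hasDerivAt_of_tendsto'
    (fun t ht => hasDerivAt_log_one_sub_mul_exp_neg hz ht) integrable limit]
  simp

lemma hasSum_boseKernel (hz : ‖z‖ ≤ 1) {t : ℝ} (ht : 0 < t) :
    HasSum (fun n : ℕ => z ^ (n + 1) * (rexp (-((n + 1 : ℕ) : ℝ) * t) : ℂ)) (boseKernel z t) := by
  have ratio_lt_one : ‖z * (rexp (-t) : ℂ)‖ < 1 := by
    rw [norm_mul, norm_real, Real.norm_of_nonneg (Real.exp_pos _).le]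
    exact mul_lt_one_of_nonneg_of_lt_one_right hz (Real.exp_pos _).le
      (Real.exp_lt_one_iff.2 (neg_lt_zero.2 ht))
  convert! (hasSum_geometric_of_norm_lt_one ratio_lt_one).mul_left (z * (rexp (-t) : ℂ))
    using 2 with n
  rw [← pow_succ', mul_pow, ← ofReal_pow, ← Real.exp_nat_mul, mul_neg, neg_mul]

lemma hasSum_mellin_boseKernel (hz : ‖z‖ ≤ 1) {s : ℂ} (hs : 1 < s.re) :
    HasSum (fun n : ℕ => Complex.Gamma s * z ^ (n + 1) / ((n + 1 : ℕ) : ℂ) ^ s)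
      (mellin (boseKernel z) s) := by
  have summable_majorant : Summable fun n : ℕ => 1 / ((n + 1 : ℕ) : ℝ) ^ s.re :=
    (summable_nat_add_iff 1).2 (Real.summable_one_div_nat_rpow.2 hs)
  have summable_norm : Summable fun n : ℕ => ‖z ^ (n + 1)‖ / ((n + 1 : ℕ) : ℝ) ^ s.re := by
    refine summable_majorant.of_nonneg_of_le (fun n => by positivity) fun n => ?_
    gcongr
    simpa using pow_le_one₀ (norm_nonneg z) hz
  simpa only [ofReal_natCast] using
    hasSum_mellin (p := fun n : ℕ => ((n + 1 : ℕ) : ℝ)) (fun n => .inr (by positivity))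
      (one_pos.trans hs) (fun t ht => hasSum_boseKernel hz ht) summable_norm

end BoseKernel

section ExpZeta

variable {a : ℝ}

lemma norm_exp_two_pi_I_mul (a : ℝ) : ‖cexp (2 * π * I * a)‖ = 1 := by
  rw [show (2 * π * I * a : ℂ) = ((2 * π * a : ℝ) : ℂ) * I by push_cast; ring]
  exact norm_exp_ofReal_mul_I _

lemma exp_two_pi_I_mul_ne_one (ha : (a : UnitAddCircle) ≠ 0) : cexp (2 * π * I * a) ≠ 1 := by
  rw [Ne, Complex.exp_eq_one_iff]
  rintro ⟨n, hn⟩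
  have a_eq_n : (a : ℂ) = n := by
    rw [mul_comm (n : ℂ)] at hn
    exact mul_left_cancel₀ two_pi_I_ne_zero hn
  exact ha ((AddCircle.coe_eq_zero_iff 1).2 ⟨n, by simpa using (ofReal_injective a_eq_n).symm⟩)

lemma one_sub_exp_two_pi_I_mul_mem_slitPlane (ha : (a : UnitAddCircle) ≠ 0) :
    1 - cexp (2 * π * I * a) ∈ slitPlane :=
  one_sub_mem_slitPlane_of_norm_le_one (norm_exp_two_pi_I_mul a).le (exp_two_pi_I_mul_ne_one ha)

lemma Gamma_mul_expZeta_of_one_lt_re (a : ℝ) {s : ℂ} (hs : 1 < s.re) :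
    Complex.Gamma s * expZeta a s = mellin (boseKernel (cexp (2 * π * I * a))) s := by
  have s_ne_zero : s ≠ 0 := ne_zero_of_one_lt_re hs
  have series := (hasSum_nat_add_iff' 1).2 (hasSum_expZeta_of_one_lt_re a hs)
  simp only [Finset.sum_range_one, Nat.cast_zero, zero_cpow s_ne_zero, div_zero,
    sub_zero] at series
  refine (series.mul_left (Complex.Gamma s)).unique ?_
  convert! hasSum_mellin_boseKernel (norm_exp_two_pi_I_mul a).le hs using 2 with n
  rw [← Complex.exp_nat_mul, mul_div_assoc, mul_comm ((n + 1 : ℕ) : ℂ)]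

lemma differentiableAt_Gamma_of_pos_re {s : ℂ} (hs : 0 < s.re) :
    DifferentiableAt ℂ Complex.Gamma s := by
  refine Complex.differentiableAt_Gamma s fun m hm => hs.not_ge ?_
  simp [hm]

lemma Gamma_mul_expZeta (ha : (a : UnitAddCircle) ≠ 0) {s : ℂ} (hs : 0 < s.re) :
    Complex.Gamma s * expZeta a s = mellin (boseKernel (cexp (2 * π * I * a))) s := by
  have isOpen_halfPlane : IsOpen {s : ℂ | 0 < s.re} := isOpen_lt continuous_const continuous_re
  have analytic_left : AnalyticOnNhd ℂ (fun s => Complex.Gamma s * expZeta a s)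
      {s | 0 < s.re} :=
    DifferentiableOn.analyticOnNhd (fun s hs =>
      ((differentiableAt_Gamma_of_pos_re hs).mul
        (differentiable_expZeta_of_ne_zero ha s)).differentiableWithinAt) isOpen_halfPlane
  have analytic_right : AnalyticOnNhd ℂ (mellin (boseKernel (cexp (2 * π * I * a))))
      {s | 0 < s.re} :=
    DifferentiableOn.analyticOnNhd (fun s hs => (differentiableAt_mellin_boseKernel
      (one_sub_exp_two_pi_I_mul_mem_slitPlane ha) hs).differentiableWithinAt) isOpen_halfPlane
  have eventually_eq : (fun s => Complex.Gamma s * expZeta a s)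
      =ᶠ[𝓝 2] mellin (boseKernel (cexp (2 * π * I * a))) := by
    filter_upwards [(isOpen_lt continuous_const continuous_re).mem_nhds
      (show (1 : ℝ) < (2 : ℂ).re by simp)] with s hs
    exact Gamma_mul_expZeta_of_one_lt_re a hs
  exact analytic_left.eqOn_of_preconnected_of_eventuallyEq analytic_right
    (convex_halfSpace_re_gt 0).isPreconnected (by simp) eventually_eq hs

lemma expZeta_one (ha : (a : UnitAddCircle) ≠ 0) :
    expZeta a 1 = -Complex.log (1 - cexp (2 * π * I * a)) := by
  rw [← mellin_boseKernel_one (one_sub_exp_two_pi_I_mul_mem_slitPlane ha),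
    ← Gamma_mul_expZeta ha (by simp), Complex.Gamma_one, one_mul]

lemma norm_one_sub_exp_two_pi_I_mul (a : ℝ) :
    ‖1 - cexp (2 * π * I * a)‖ = |2 * Real.sin (π * a)| := by
  rw [norm_sub_rev, show (2 * π * I * a : ℂ) = I * ((2 * π * a : ℝ) : ℂ) by push_cast; ring,
    norm_exp_I_mul_ofReal_sub_one, Real.norm_eq_abs]
  ring_nf

lemma cosZeta_one (ha : (a : UnitAddCircle) ≠ 0) :
    cosZeta a 1 = (-Real.log |2 * Real.sin (π * a)| : ℝ) := by
  set w := 1 - cexp (2 * π * I * a) with hw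
  have conj_w : 1 - cexp (2 * π * I * (-a : ℝ)) = conj w := by
    simp [hw, ← exp_conj, map_ofNat]
  have log_conj_w : Complex.log (conj w) = conj (Complex.log w) :=
    log_conj w (slitPlane_arg_ne_pi (one_sub_exp_two_pi_I_mul_mem_slitPlane ha))
  have neg_coe_ne_zero : ((-a : ℝ) : UnitAddCircle) ≠ 0 := by simpa using ha
  calc cosZeta a 1 = -((Complex.log w + conj (Complex.log w)) / 2) := by
        rw [cosZeta_eq, ← AddCircle.coe_neg, expZeta_one ha, expZeta_one neg_coe_ne_zero, conj_w,
          log_conj_w]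
        ring
    _ = (-Real.log |2 * Real.sin (π * a)| : ℝ) := by
        rw [← re_eq_add_conj, log_re, norm_one_sub_exp_two_pi_I_mul, ofReal_neg]

lemma exp_neg_cosZeta_one (ha : (a : UnitAddCircle) ≠ 0) :
    cexp (-cosZeta a 1) = (|2 * Real.sin (π * a)| : ℝ) := by
  have abs_pos : 0 < |2 * Real.sin (π * a)| := by
    rw [← norm_one_sub_exp_two_pi_I_mul]
    exact norm_pos_iff.2 (slitPlane_ne_zero (one_sub_exp_two_pi_I_mul_mem_slitPlane ha))
  rw [cosZeta_one ha, ofReal_neg, neg_neg, ← ofReal_exp, Real.exp_log abs_pos]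

end ExpZeta

lemma hasDerivAt_hurwitzZetaEven_zero {a : UnitAddCircle} (ha : a ≠ 0) :
    HasDerivAt (hurwitzZetaEven a) (cosZeta a 1 / 2) 0 := by
  have cosZeta_one_eq : cosZeta a 1 = completedHurwitzZetaEven a 0 := by
    rw [cosZeta, Function.update_of_ne one_ne_zero, Gammaℝ_one, div_one,
      ← completedCosZeta_one_sub, sub_zero]
  have completed_tendsto : Tendsto (completedHurwitzZetaEven a) (𝓝[≠] 0)
      (𝓝 (completedHurwitzZetaEven a 0)) :=
    (differentiableAt_completedHurwitzZetaEven a (.inr ha)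
      zero_ne_one).continuousAt.continuousWithinAt
  rw [hasDerivAt_iff_tendsto_slope, cosZeta_one_eq]
  refine (completed_tendsto.div Gammaℝ_residue_zero two_ne_zero).congr fun s => ?_
  rw [slope_def_field, hurwitzZetaEven_apply_zero, if_neg ha,
    hurwitzZetaEven_def_of_ne_or_ne (.inl ha), sub_zero, sub_zero, div_div, mul_comm, Pi.div_apply]

lemma hurwitzZeta_add_hurwitzZeta_neg (a : UnitAddCircle) (s : ℂ) :
    hurwitzZeta a s + hurwitzZeta (-a) s = 2 * hurwitzZetaEven a s := by
  rw [hurwitzZetaEven_eq]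
  ring

lemma hasDerivAt_const_cpow_mul_hurwitzZetaEven_zero {a : UnitAddCircle} (ha : a ≠ 0) {c : ℂ}
    (hc : c ≠ 0) :
    HasDerivAt (fun s => c ^ (-s) * hurwitzZetaEven a s) (cosZeta a 1 / 2) 0 := by
  have hcpow := (hasDerivAt_neg (0 : ℂ)).const_cpow (c := c) (.inl hc)
  simpa [hurwitzZetaEven_apply_zero, ha] using! hcpow.mul (hasDerivAt_hurwitzZetaEven_zero ha)

lemma coe_unitAddCircle_ne_zero_of_mem_Ioo {a : ℝ} (ha : a ∈ Ioo (0 : ℝ) 1) :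
    (a : UnitAddCircle) ≠ 0 :=
  (AddCircle.coe_eq_zero_iff_of_mem_Ico (Ioo_subset_Ico_self ha)).not.2 ha.1.ne'

theorem scalar_zeta_determinant_general {a : ℝ} (ha : (a : UnitAddCircle) ≠ 0) {c : ℂ}
    (hc : c ≠ 0) (G : ℂ → ℂ)
    (hG : ∀ s : ℂ, G s = 2 * c ^ (-(2 * s)) *
      (hurwitzZeta (↑a : UnitAddCircle) (2 * s)
        + hurwitzZeta (↑(1 - a) : UnitAddCircle) (2 * s))) :
    DifferentiableAt ℂ G 0 ∧
      Complex.exp (-(deriv G 0)) = (16 * Real.sin (π * a) ^ 4 : ℝ) := by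
  have one_sub_eq_neg : ((1 - a : ℝ) : UnitAddCircle) = -a := by
    rw [AddCircle.coe_sub, AddCircle.coe_period, zero_sub]
  have G_eq : G = fun s => 4 * (c ^ (-(2 * s)) * hurwitzZetaEven a (2 * s)) := by
    funext s
    rw [hG, one_sub_eq_neg, hurwitzZeta_add_hurwitzZeta_neg]
    ring
  have hderiv : HasDerivAt G (4 * cosZeta a 1) 0 := by
    have hscale : HasDerivAt (fun s : ℂ => 2 * s) 2 0 := by
      simpa using (hasDerivAt_id (0 : ℂ)).const_mul 2
    have hcomp := (hasDerivAt_const_cpow_mul_hurwitzZetaEven_zero ha hc).comp_of_eq 0 hscale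
      (mul_zero 2).symm
    simpa [G_eq, Function.comp_def] using! hcomp.const_mul 4
  refine ⟨hderiv.differentiableAt, ?_⟩
  calc cexp (-deriv G 0) = cexp (-cosZeta a 1) ^ 4 := by
        rw [hderiv.deriv, ← Complex.exp_nat_mul, Nat.cast_ofNat, mul_neg]
    _ = (|2 * Real.sin (π * a)| ^ 4 : ℝ) := by
        rw [exp_neg_cosZeta_one ha, ofReal_pow]
    _ = (16 * Real.sin (π * a) ^ 4 : ℝ) := by
        rw [Even.pow_abs (by decide), mul_pow]
        norm_num

/-- The zeta-regularised determinant of the operator `L = -d²/dt² - 2A d/dt - A²` for a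
real scalar field minimally coupled to a constant `SO(2)` gauge field of holonomy angle
`2πa` on a circle of circumference `l`: with
`G(s) = 2 (2π/l)^{-2s} (ζ_H(2s,a) + ζ_H(2s,1-a))`, the function `G` is differentiable at
`0` and `exp(-G'(0)) = 16 sin⁴(πa)`, so that `(det L)^{-1/2} = 1/(4 sin²(πa))`. -/
theorem scalar_zeta_determinant
    (a l : ℝ) (ha : a ∈ Set.Ioo (0 : ℝ) 1) (hl : 0 < l)
    (G : ℂ → ℂ)
    (hG : ∀ s : ℂ, G s = 2 * ((2 * π / l : ℝ) : ℂ) ^ (-(2 * s)) *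
      (hurwitzZeta (↑a : UnitAddCircle) (2 * s)
        + hurwitzZeta (↑(1 - a) : UnitAddCircle) (2 * s))) :
    DifferentiableAt ℂ G 0 ∧
      Complex.exp (-(deriv G 0)) = (16 * Real.sin (π * a) ^ 4 : ℝ) := by
  exact scalar_zeta_determinant_general (coe_unitAddCircle_ne_zero_of_mem_Ioo ha)
    (ofReal_ne_zero.2 (div_pos two_pi_pos hl).ne') G hG
end

section
/- Let η = diag(1,1,1,0) be the degenerate 4 × 4 bilinear form, and for x, y ∈ ℝ⁴ and a 4 × 4 real matrix W define L(x, W, y) = Σ_{σ ∈ S₄} sign(σ) · x_{σ(1)} · W_{σ(2)σ(3)} · y_{σ(4)} (i.e. ε_{ABCD} x^A W^{BC} y^D with ε the Levi-Civita symbol on four indices). Then for every invertible 4 × 4 real matrix V with det V = 1 and V η Vᵀ = η, and every 4 × 4 real matrix Z, L(V x, (V Z V^{−1}) η, V y) = L(x, Z η, y). (This is the ISO(3) gauge invariance of the discrete Lagrangian L_e = −(Q_e φ_{s(e)})^A (log H_e)^{BC} ε_{ABCD} φ^D_{f(e)} of the quantum ISO(3) gravity model: under the gauge transformation Q_e ↦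 U_{f(e)}^{−1} Q_e U_{s(e)}, the holonomy logarithm transforms by conjugation and the per-edge Lagrangian is unchanged.) -/
open Matrix

/-- The degenerate bilinear form `η = diag(1,1,1,0)` of the 4-dimensional matrix
representation of `ISO(3)`. -/
noncomputable def isoEta : Matrix (Fin 4) (Fin 4) ℝ :=
  Matrix.diagonal (fun i => if i = 3 then 0 else 1)

/-- `L(x, W, y) = ε_{ABCD} x^A W^{BC} y^D`, the Levi-Civita contraction on four indices. -/
noncomputable def epsContract (x : Fin 4 → ℝ) (W : Matrix (Fin 4) (Fin 4) ℝ)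
    (y : Fin 4 → ℝ) : ℝ :=
  ∑ σ : Equiv.Perm (Fin 4),
    ((Equiv.Perm.sign σ : ℤ) : ℝ) * x (σ 0) * W (σ 1) (σ 2) * y (σ 3)

/-!
Raising an index with `η` turns conjugation into congruence: `V η Vᵀ = η` says `V⁻¹ η = η Vᵀ`, so
`(V Z V⁻¹) η = V (Z η) Vᵀ`. The contraction is linear in its matrix argument, and on a rank-one
matrix `u wᵀ` it is the determinant with rows `x, u, w, y`, which is scaled by `det V` when `V` is
applied to all four vectors.
-/

theorem det_of_mulVec {n R : Type*} [Fintype n] [DecidableEq n] [CommRing R]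
    (V : Matrix n n R) (r : n → n → R) :
    (Matrix.of fun i => V *ᵥ r i).det = V.det * (Matrix.of r).det := by
  have rows_eq_mul_transpose : (Matrix.of fun i => V *ᵥ r i) = Matrix.of r * Vᵀ := by
    ext i j
    exact dotProduct_comm _ _
  rw [rows_eq_mul_transpose, det_mul, det_transpose, mul_comm]

theorem sum_vecMulVec_col_single {m n R : Type*} [Fintype n] [DecidableEq n] [NonAssocSemiring R]
    (W : Matrix m n R) : ∑ c, vecMulVec (W.col c) (Pi.single c 1) = W := by
  ext i j
  simp [Matrix.sum_apply, vecMulVec_apply, Pi.single_apply]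

theorem inv_mul_eq_mul_of_mul_mul_eq {m n R : Type*} [Fintype m] [Fintype n] [DecidableEq n]
    [CommRing R] {V : Matrix n n R} {η : Matrix n m R} {U : Matrix m m R}
    (hV : IsUnit V.det) (hη : V * η * U = η) : V⁻¹ * η = η * U :=
  calc V⁻¹ * η = V⁻¹ * (V * (η * U)) := by rw [← Matrix.mul_assoc V, hη]
    _ = η * U := nonsing_inv_mul_cancel_left V _ hV

theorem epsContract_sum {ι : Type*} (s : Finset ι) (x y : Fin 4 → ℝ)
    (W : ι → Matrix (Fin 4) (Fin 4) ℝ) :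
    epsContract x (∑ i ∈ s, W i) y = ∑ i ∈ s, epsContract x (W i) y := by
  simp only [epsContract, Matrix.sum_apply, Finset.mul_sum, Finset.sum_mul]
  exact Finset.sum_comm

theorem epsContract_vecMulVec (x u w y : Fin 4 → ℝ) :
    epsContract x (vecMulVec u w) y = (Matrix.of ![x, u, w, y]).det := by
  rw [← det_transpose, det_apply', epsContract]
  refine Finset.sum_congr rfl fun σ _ => ?_
  simp only [Fin.prod_univ_four, transpose_apply, of_apply, vecMulVec_apply, cons_val]
  ring

theorem epsContract_mulVec_vecMulVec (V : Matrix (Fin 4) (Fin 4) ℝ) (x u w y : Fin 4 → ℝ) :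
    epsContract (V *ᵥ x) (vecMulVec (V *ᵥ u) (V *ᵥ w)) (V *ᵥ y)
      = V.det * epsContract x (vecMulVec u w) y := by
  rw [epsContract_vecMulVec, epsContract_vecMulVec, ← det_of_mulVec]
  congr 2
  ext i : 1
  fin_cases i <;> rfl

theorem epsContract_mulVec_congruence (V W : Matrix (Fin 4) (Fin 4) ℝ) (x y : Fin 4 → ℝ) :
    epsContract (V *ᵥ x) (V * W * Vᵀ) (V *ᵥ y) = V.det * epsContract x W y := by
  have congruence_eq_sum :
      V * W * Vᵀ = ∑ c, vecMulVec (V *ᵥ W.col c) (V *ᵥ Pi.single c 1) := by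
    conv_lhs => rw [← sum_vecMulVec_col_single W]
    simp only [Finset.mul_sum, Matrix.sum_mul, mul_vecMulVec, vecMulVec_mul, vecMul_transpose]
  calc epsContract (V *ᵥ x) (V * W * Vᵀ) (V *ᵥ y)
      = ∑ c, V.det * epsContract x (vecMulVec (W.col c) (Pi.single c 1)) y := by
        simp only [congruence_eq_sum, epsContract_sum, epsContract_mulVec_vecMulVec]
    _ = V.det * epsContract x W y := by
        rw [← Finset.mul_sum, ← epsContract_sum, sum_vecMulVec_col_single]

theorem discrete_lagrangian_gauge_invariant_general
    {V η : Matrix (Fin 4) (Fin 4) ℝ} (hV : IsUnit V.det) (hη : V * η * Vᵀ = η)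
    (Z : Matrix (Fin 4) (Fin 4) ℝ) (x y : Fin 4 → ℝ) :
    epsContract (V *ᵥ x) (V * Z * V⁻¹ * η) (V *ᵥ y) = V.det * epsContract x (Z * η) y := by
  have conj_mul_eq_congruence : V * Z * V⁻¹ * η = V * (Z * η) * Vᵀ := by
    rw [Matrix.mul_assoc, inv_mul_eq_mul_of_mul_mul_eq hV hη]
    simp only [Matrix.mul_assoc]
  rw [conj_mul_eq_congruence, epsContract_mulVec_congruence]

/-- `ISO(3)` gauge invariance of the discrete Lagrangian
`L_e = -(Q_e φ_{s(e)})^A (log H_e)^{BC} ε_{ABCD} φ^D_{f(e)}`: for every `V` with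
`det V = 1` and `V η Vᵀ = η`, and every matrix `Z`,
`L(Vx, (V Z V⁻¹) η, Vy) = L(x, Z η, y)`. -/
theorem discrete_lagrangian_gauge_invariant
    (V : Matrix (Fin 4) (Fin 4) ℝ) (hVdet : V.det = 1)
    (hVeta : V * isoEta * Vᵀ = isoEta)
    (Z : Matrix (Fin 4) (Fin 4) ℝ) (x y : Fin 4 → ℝ) :
    epsContract (V.mulVec x) ((V * Z * V⁻¹) * isoEta) (V.mulVec y)
      = epsContract x (Z * isoEta) y := by
  rw [discrete_lagrangian_gauge_invariant_general (by simp [hVdet]) hVeta, hVdet, one_mul]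
end

section
/- Let K be a field of characteristic zero (e.g. ℂ), n ≥ 1, N ≥ 1, and let Q_0, …, Q_{N−1} be n × n matrices over K. Let V be the K-vector space with basis {b_{j,i}, a_{j,i} : 0 ≤ j ≤ N−1, 1 ≤ i ≤ n}, and in the exterior algebra Λ(V) set ω = Σ_{j=0}^{N−1} ( Σ_{i} b_{j,i} ∧ a_{j,i} − Σ_{i,k} (Q_j)_{ik} · b_{j,i} ∧ a_{(j+1) mod N, k} ). Then ω^{Nn} = (Nn)! · det(I_n − Q_0 Q_1 ⋯ Q_{N−1}) · ⋀_{j=0}^{N−1} (b_{j,1} ∧ a_{j,1} ∧ ⋯ ∧ b_{j,n} ∧ a_{j,n}). (This is the fermionic state sum model on a circle triangulated with N edges: the Berezin integral Z = ∫ ∏_j dψ_j dψ̄_j exp(Σ_j [ψ̄_j ψ_j − ψ̄_j Q_j ψ_{j+1}]) equals det(I − Q) where Q = Q_0 ⋯ Q_{N−1} is the holonomy, independently of the triangulation.) -/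
open ExteriorAlgebra

/-!
Write `ω = ∑ p q, M p q • (b p ∧ a q)`, where `M = 1 - C` and `C` is the block matrix of the
weighted cycle. Then `ω` is a sum of the commuting square-zero elements `b p ∧ (∑ q, M p q • a q)`,
so its top power is a factorial times their product. That product is alternating in its second
factors, which produces `det M`.

To evaluate `det (1 - C)`, let `U` be the weighted path obtained by deleting the closing edge, and
let `P` be the block column of holonomies `P j = Q j ⋯ Q (N - 1)` from vertex `j` through the
closing edge. Since `P - U P` is supported on the last vertex, where it is the weight of the
closing edge, `1 - C = (1 - U) (1 - P e₀ᵀ)`. The first factor is block upper unitriangular; the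
second is block lower triangular with diagonal blocks `1 - P 0, 1, …, 1`, and `P 0` is the holonomy
of the circle.
-/

namespace FermionicStateSum

section SquareZero

variable {A I : Type*} [Semiring A]

theorem add_pow_succ_of_mul_self_eq_zero {x y : A} (hxy : Commute x y) (hx : x * x = 0) (m : ℕ) :
    (x + y) ^ (m + 1) = y ^ (m + 1) + (m + 1) • (x * y ^ m) := by
  induction m with
  | zero => simp [add_comm]
  | succ m ih =>
    have hx_mul : x * (x * y ^ m) = 0 := by rw [← mul_assoc, hx, zero_mul]
    have hy_mul : y * (x * y ^ m) = x * y ^ (m + 1) := by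
      rw [← mul_assoc, ← hxy.eq, mul_assoc, ← pow_succ']
    rw [pow_succ', ih, add_mul, mul_add, mul_add, mul_smul_comm, mul_smul_comm, hx_mul, hy_mul,
      smul_zero, add_zero, ← pow_succ', succ_nsmul _ (m + 1), add_comm, add_assoc]

theorem commute_sum_of_pairwise_insert [DecidableEq I] {s : Finset I} {f : I → A} {i : I}
    (hi : i ∉ s) (hcomm : (↑(insert i s) : Set I).Pairwise (Function.onFun Commute f)) :
    Commute (f i) (∑ j ∈ s, f j) :=
  Commute.sum_right _ _ _ fun _ hj => hcomm (Finset.mem_insert_self i s)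
    (Finset.mem_insert_of_mem hj) (ne_of_mem_of_not_mem hj hi).symm

theorem sum_pow_card_succ_eq_zero {s : Finset I} {f : I → A}
    (hcomm : (s : Set I).Pairwise (Function.onFun Commute f)) (hsq : ∀ i ∈ s, f i * f i = 0) :
    (∑ i ∈ s, f i) ^ (s.card + 1) = 0 := by
  classical
  induction s using Finset.induction_on with
  | empty => simp
  | insert i s hi ih =>
    have hcomm_s : (s : Set I).Pairwise (Function.onFun Commute f) :=
      hcomm.mono (Finset.coe_subset.mpr (Finset.subset_insert i s))
    have hcomm_i : Commute (f i) (∑ j ∈ s, f j) := commute_sum_of_pairwise_insert hi hcomm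
    rw [Finset.forall_mem_insert] at hsq
    rw [Finset.sum_insert hi, Finset.card_insert_of_notMem hi]
    exact hcomm_i.add_pow_eq_zero_of_add_le_succ_of_pow_eq_zero
      ((pow_two _).trans hsq.1) (ih hcomm_s hsq.2) (by omega)

theorem sum_pow_card_eq_factorial_smul_noncommProd {s : Finset I} {f : I → A}
    (hcomm : (s : Set I).Pairwise (Function.onFun Commute f)) (hsq : ∀ i ∈ s, f i * f i = 0) :
    (∑ i ∈ s, f i) ^ s.card = s.card.factorial • s.noncommProd f hcomm := by
  classical
  induction s using Finset.induction_on with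
  | empty => simp
  | insert i s hi ih =>
    have hcomm_s : (s : Set I).Pairwise (Function.onFun Commute f) :=
      hcomm.mono (Finset.coe_subset.mpr (Finset.subset_insert i s))
    have hcomm_i : Commute (f i) (∑ j ∈ s, f j) := commute_sum_of_pairwise_insert hi hcomm
    rw [Finset.forall_mem_insert] at hsq
    rw [Finset.sum_insert hi, Finset.card_insert_of_notMem hi,
      add_pow_succ_of_mul_self_eq_zero hcomm_i hsq.1, sum_pow_card_succ_eq_zero hcomm_s hsq.2,
      ih hcomm_s hsq.2, Finset.noncommProd_insert_of_notMem _ _ _ _ hi, mul_smul_comm, smul_smul,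
      zero_add, Nat.factorial_succ]

end SquareZero

theorem noncommProd_univ_prod_fin {A : Type*} [Monoid A] {N n : ℕ} (f : Fin N × Fin n → A)
    (hcomm : Set.Pairwise ↑(Finset.univ : Finset (Fin N × Fin n)) (Function.onFun Commute f)) :
    Finset.univ.noncommProd f hcomm =
      ((List.finRange N).map fun j => ((List.finRange n).map fun i => f (j, i)).prod).prod := by
  have huniv : (List.finRange N ×ˢ List.finRange n).toFinset = Finset.univ := by
    ext ⟨j, i⟩; simp [List.mem_product]
  rw [← Finset.noncommProd_congr huniv (fun _ _ => rfl) (by rwa [huniv]),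
    Finset.noncommProd_toFinset _ _ _ ((List.nodup_finRange N).product (List.nodup_finRange n))]
  simp [SProd.sprod, List.product, List.flatMap, List.prod_flatten, List.map_flatten,
    Function.comp_def]

section Pairs

variable {R V I : Type*} [CommRing R] [AddCommGroup V] [Module R V]

theorem ι_mul_ι_eq_neg (u v : V) : ι R u * ι R v = -(ι R v * ι R u) :=
  eq_neg_of_add_eq_zero_left (ι_add_mul_swap u v)

theorem commute_ι_mul_ι (u v w z : V) : Commute (ι R u * ι R v) (ι R w * ι R z) := by
  have commute_ι (t : V) : Commute (ι R u * ι R v) (ι R t) := by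
    rw [Commute, SemiconjBy, mul_assoc, ι_mul_ι_eq_neg v t, mul_neg, ← mul_assoc,
      ι_mul_ι_eq_neg u t, neg_mul, neg_neg, mul_assoc]
  exact (commute_ι w).mul_right (commute_ι z)

theorem ι_mul_ι_mul_ι_mul_ι_self (u v w : V) : ι R u * ι R v * (ι R w * ι R v) = 0 := by
  rw [ι_mul_ι_eq_neg w v, mul_neg, mul_assoc, ← mul_assoc (ι R v), ι_sq_zero, zero_mul, mul_zero,
    neg_zero]

theorem pairwise_commute_ι_mul_ι (b v : I → V) :
    Pairwise (Function.onFun Commute fun i => ι R (b i) * ι R (v i)) :=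
  fun _ _ _ => commute_ι_mul_ι _ _ _ _

variable [Fintype I]

variable (R) in
/-- The top wedge product `⋀ i, b i ∧ v i`. Its degree-two factors commute, so no order on `I` is
needed. -/
def pairProd (b v : I → V) : ExteriorAlgebra R V :=
  Finset.univ.noncommProd (fun i => ι R (b i) * ι R (v i))
    ((pairwise_commute_ι_mul_ι b v).set_pairwise _)

theorem pairProd_eq_mul_noncommProd_erase [DecidableEq I] (b v : I → V) (i : I) :
    pairProd R b v = ι R (b i) * ι R (v i) *
      (Finset.univ.erase i).noncommProd (fun j => ι R (b j) * ι R (v j))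
        ((pairwise_commute_ι_mul_ι b v).set_pairwise _) :=
  (Finset.mul_noncommProd_erase _ (Finset.mem_univ i) _ _).symm

theorem pairProd_update [DecidableEq I] (b v : I → V) (i : I) (x : V) :
    pairProd R b (Function.update v i x) = ι R (b i) * ι R x *
      (Finset.univ.erase i).noncommProd (fun j => ι R (b j) * ι R (v j))
        ((pairwise_commute_ι_mul_ι b v).set_pairwise _) := by
  rw [pairProd_eq_mul_noncommProd_erase b _ i, Function.update_self]
  congr 1
  refine Finset.noncommProd_congr rfl (fun j hj => ?_) _
  rw [Function.update_of_ne (Finset.ne_of_mem_erase hj)]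

theorem pairProd_eq_zero_of_eq (b v : I → V) {i j : I} (hv : v i = v j) (hij : i ≠ j) :
    pairProd R b v = 0 := by
  classical
  have hj : j ∈ Finset.univ.erase i := Finset.mem_erase.mpr ⟨hij.symm, Finset.mem_univ j⟩
  rw [pairProd_eq_mul_noncommProd_erase b v i, ← Finset.mul_noncommProd_erase _ hj, ← mul_assoc,
    hv, ι_mul_ι_mul_ι_mul_ι_self, zero_mul]

variable (R) in
/-- `pairProd R b v` as an alternating map in `v`, so that a linear substitution of the `v i`
produces a determinant. -/
def pairProdAlternating (b : I → V) : V [⋀^I]→ₗ[R] ExteriorAlgebra R V where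
  toFun := pairProd R b
  map_update_add' v i x y := by
    simp only [pairProd_update, map_add, mul_add, add_mul]
  map_update_smul' v i c x := by
    simp only [pairProd_update, map_smul, mul_smul_comm, smul_mul_assoc]
  map_eq_zero_of_eq' v _ _ := pairProd_eq_zero_of_eq b v

variable [DecidableEq I]

theorem alternatingMap_sum_smul_eq_det_smul {W : Type*} [AddCommGroup W] [Module R W]
    (f : V [⋀^I]→ₗ[R] W) (M : Matrix I I R) (v : I → V) :
    f (fun i => ∑ k, M i k • v k) = M.det • f v := by
  have linearCombination_basis :
      (fun i => Fintype.linearCombination R v (Pi.basisFun R I i)) = v := by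
    ext i; simp
  have det_basis : Matrix.detRowAlternating (Pi.basisFun R I) = 1 := by
    rw [← Pi.basisFun_det, Module.Basis.det_self]
  have compLinearMap_eq : f.compLinearMap (Fintype.linearCombination R v) =
      (LinearMap.toSpanSingleton R W (f v)).compAlternatingMap Matrix.detRowAlternating := by
    refine Module.Basis.ext_alternating (Pi.basisFun R I) fun r hr => ?_
    let σ : Equiv.Perm I := Equiv.ofBijective r (Finite.injective_iff_bijective.mp hr)
    have basis_comp_eq : (fun i => Pi.basisFun R I (r i)) = Pi.basisFun R I ∘ σ := rfl
    rw [basis_comp_eq, AlternatingMap.map_perm, AlternatingMap.map_perm,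
      AlternatingMap.compLinearMap_apply, LinearMap.compAlternatingMap_apply,
      linearCombination_basis, det_basis, LinearMap.toSpanSingleton_apply, one_smul]
  exact DFunLike.congr_fun compLinearMap_eq M

theorem sum_smul_ι_mul_ι_pow_card (M : Matrix I I R) (b a : I → V) :
    (∑ i, ∑ k, M i k • (ι R (b i) * ι R (a k))) ^ Fintype.card I =
      ((Fintype.card I).factorial * M.det : R) • pairProd R b a := by
  calc
    _ = (∑ i, ι R (b i) * ι R (∑ k, M i k • a k)) ^ Fintype.card I := by
      simp only [map_sum, map_smul, Finset.mul_sum, mul_smul_comm]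
    _ = (Fintype.card I).factorial • pairProd R b (fun i => ∑ k, M i k • a k) :=
      sum_pow_card_eq_factorial_smul_noncommProd ((pairwise_commute_ι_mul_ι _ _).set_pairwise _)
        fun _ _ => ι_mul_ι_mul_ι_mul_ι_self _ _ _
    _ = (Fintype.card I).factorial • M.det • pairProd R b a :=
      congrArg _ (alternatingMap_sum_smul_eq_det_smul (pairProdAlternating R b) M a)
    _ = _ := by rw [mul_smul, Nat.cast_smul_eq_nsmul]

end Pairs

section BlockTriangular

variable {R m I α : Type*} [CommRing R] [Fintype m] [DecidableEq m] [Fintype I] [DecidableEq I]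
  [LinearOrder α]

theorem det_comp_of_blockTriangular {M : Matrix I I (Matrix m m R)} (e : I ≃ α)
    (hM : M.BlockTriangular e) : (Matrix.comp I I m m R M).det = ∏ i, (M i i).det := by
  have hcomp : (Matrix.comp I I m m R M).BlockTriangular (e ∘ Prod.fst) :=
    fun p q hpq => congrFun₂ (hM hpq) p.2 q.2
  have det_block (i : I) :
      ((Matrix.comp I I m m R M).toSquareBlock (e ∘ Prod.fst) (e i)).det = (M i i).det := by
    let fiberEquiv : m ≃ {p : I × m // (e ∘ Prod.fst) p = e i} :=
      { toFun := fun x => ⟨(i, x), rfl⟩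
        invFun := fun p => p.1.2
        left_inv := fun _ => rfl
        right_inv := fun ⟨_, hp⟩ => Subtype.ext (Prod.ext (e.injective hp).symm rfl) }
    exact (Matrix.det_submatrix_equiv_self fiberEquiv _).symm
  have : Fintype α := Fintype.ofEquiv I e
  rw [hcomp.det_fintype, ← Equiv.prod_comp e]
  exact Finset.prod_congr rfl fun i _ => det_block i

end BlockTriangular

section TailProd

variable {A : Type*} [Monoid A] {N : ℕ}

/-- The product `a j * a (j + 1) * ⋯ * a (N - 1)`: the holonomy from vertex `j` of the circle along
all the remaining edges, up to and including the closing edge `N - 1 → 0`. -/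
def tailProd (a : Fin N → A) (j : Fin N) : A :=
  ((List.ofFn a).drop j).prod

theorem tailProd_zero [NeZero N] (a : Fin N → A) : tailProd a 0 = (List.ofFn a).prod := by
  simp [tailProd]

theorem tailProd_last (a : Fin (N + 1) → A) : tailProd a (Fin.last N) = a (Fin.last N) := by
  rw [tailProd, List.drop_eq_getElem_cons (by simp), List.prod_cons, List.getElem_ofFn,
    List.drop_of_length_le (by simp), List.prod_nil, mul_one]

theorem tailProd_castSucc (a : Fin (N + 1) → A) (j : Fin N) :
    tailProd a j.castSucc = a j.castSucc * tailProd a j.succ := by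
  rw [tailProd, List.drop_eq_getElem_cons (by simp), List.prod_cons, List.getElem_ofFn]
  rfl

end TailProd

section CycleMatrix

variable {A : Type*} [Semiring A] {N : ℕ}

/-- The weighted adjacency matrix of the oriented cycle on `Fin N`, the edge `j → j + 1` having
weight `a j`. Weights in a matrix ring turn it into a block matrix, flattened by `Matrix.comp`. -/
def cycleMatrix [NeZero N] (a : Fin N → A) : Matrix (Fin N) (Fin N) A :=
  Matrix.of fun j => Pi.single (j + 1) (a j)

/-- The weighted adjacency matrix of the path obtained from the cycle by deleting the edge from
`Fin.last N` to `0`; unlike the cycle it is strictly upper triangular. -/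
def pathMatrix (a : Fin (N + 1) → A) : Matrix (Fin (N + 1)) (Fin (N + 1)) A :=
  (cycleMatrix a).updateRow (Fin.last N) 0

theorem pathMatrix_last (a : Fin (N + 1) → A) : pathMatrix a (Fin.last N) = 0 :=
  Matrix.updateRow_self

theorem pathMatrix_castSucc (a : Fin (N + 1) → A) (j : Fin N) :
    pathMatrix a j.castSucc = Pi.single j.succ (a j.castSucc) := by
  rw [pathMatrix, Matrix.updateRow_ne j.castSucc_ne_last, ← Fin.coeSucc_eq_succ]
  rfl

theorem pathMatrix_mulVec_tailProd_add (a : Fin (N + 1) → A) :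
    (pathMatrix a).mulVec (tailProd a) + Pi.single (Fin.last N) (a (Fin.last N)) =
      tailProd a := by
  ext j
  cases j using Fin.lastCases with
  | last => simp [tailProd_last, Matrix.mulVec, pathMatrix_last]
  | cast j => simp [tailProd_castSucc, Matrix.mulVec, pathMatrix_castSucc]

theorem cycleMatrix_eq_pathMatrix_add (a : Fin (N + 1) → A) :
    cycleMatrix a = pathMatrix a +
      Matrix.vecMulVec (Pi.single (Fin.last N) (a (Fin.last N))) (Pi.single 0 1) := by
  ext j k
  cases j using Fin.lastCases with
  | last => simp [cycleMatrix, pathMatrix_last, Matrix.vecMulVec_apply, Pi.single_apply]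
  | cast j => simp [cycleMatrix, pathMatrix_castSucc, Matrix.vecMulVec_apply]

theorem pathMatrix_apply_eq_zero_of_le (a : Fin (N + 1) → A) {j k : Fin (N + 1)} (hkj : k ≤ j) :
    pathMatrix a j k = 0 := by
  cases j using Fin.lastCases with
  | last => rw [pathMatrix_last, Pi.zero_apply]
  | cast j =>
    rw [pathMatrix_castSucc, Pi.single_eq_of_ne (hkj.trans_lt j.castSucc_lt_succ).ne]

end CycleMatrix

theorem one_sub_cycleMatrix_eq_mul {A : Type*} [Ring A] {N : ℕ} (a : Fin (N + 1) → A) :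
    1 - cycleMatrix a = (1 - pathMatrix a) *
      (1 - Matrix.vecMulVec (tailProd a) (Pi.single 0 1)) := by
  rw [mul_sub, mul_one, Matrix.mul_vecMulVec, Matrix.sub_mulVec, Matrix.one_mulVec,
    ← eq_sub_of_add_eq' (pathMatrix_mulVec_tailProd_add a), cycleMatrix_eq_pathMatrix_add,
    sub_sub]

section CycleDet

variable {R m : Type*} [CommRing R] [Fintype m] [DecidableEq m] {N : ℕ}

theorem det_comp_one_sub_pathMatrix (Q : Fin (N + 1) → Matrix m m R) :
    (Matrix.comp _ _ m m R (1 - pathMatrix Q)).det = 1 := by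
  have upper : (1 - pathMatrix Q).IsUpperTriangular :=
    Matrix.blockTriangular_one.sub fun _ _ hkj => pathMatrix_apply_eq_zero_of_le Q hkj.le
  rw [det_comp_of_blockTriangular (Equiv.refl _) upper]
  simp [pathMatrix_apply_eq_zero_of_le Q le_rfl]

theorem det_comp_one_sub_vecMulVec_single_zero (w : Fin (N + 1) → Matrix m m R) :
    (Matrix.comp _ _ m m R (1 - Matrix.vecMulVec w (Pi.single 0 1))).det = (1 - w 0).det := by
  have lower : (1 - Matrix.vecMulVec w (Pi.single 0 1)).IsLowerTriangular := by
    refine Matrix.blockTriangular_one.sub fun j k (hjk : j < k) => ?_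
    rw [Matrix.vecMulVec_apply, Pi.single_eq_of_ne (Fin.ne_zero_of_lt hjk), mul_zero]
  rw [det_comp_of_blockTriangular OrderDual.toDual lower, Fin.prod_univ_succ]
  simp [Matrix.vecMulVec_apply]

theorem det_comp_one_sub_cycleMatrix [NeZero N] (Q : Fin N → Matrix m m R) :
    (Matrix.comp _ _ m m R (1 - cycleMatrix Q)).det = (1 - (List.ofFn Q).prod).det := by
  obtain ⟨N, rfl⟩ := Nat.exists_eq_succ_of_ne_zero (NeZero.ne N)
  rw [one_sub_cycleMatrix_eq_mul, ← Matrix.compRingEquiv_apply, map_mul, Matrix.det_mul,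
    Matrix.compRingEquiv_apply, Matrix.compRingEquiv_apply, det_comp_one_sub_pathMatrix, one_mul,
    det_comp_one_sub_vecMulVec_single_zero, tailProd_zero]

end CycleDet

theorem sum_comp_one_sub_cycleMatrix_smul {R m W : Type*} [CommRing R] [Fintype m] [DecidableEq m]
    [AddCommGroup W] [Module R W] {N : ℕ} [NeZero N] (Q : Fin N → Matrix m m R)
    (f : Fin N × m → Fin N × m → W) :
    ∑ p, ∑ q, Matrix.comp _ _ m m R (1 - cycleMatrix Q) p q • f p q =
      ∑ j, (∑ i, f (j, i) (j, i) - ∑ i, ∑ k, Q j i k • f (j, i) (j + 1, k)) := by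
  have row_sum (j : Fin N) (i : m) :
      ∑ q, Matrix.comp _ _ m m R (cycleMatrix Q) (j, i) q • f (j, i) q =
        ∑ k, Q j i k • f (j, i) (j + 1, k) := by
    rw [Fintype.sum_prod_type, Fintype.sum_eq_single (j + 1)]
    · simp [cycleMatrix]
    · intro k hk
      simp [cycleMatrix, hk]
  have comp_one_sub : Matrix.comp _ _ m m R (1 - cycleMatrix Q) =
      1 - Matrix.comp _ _ m m R (cycleMatrix Q) := by
    simp only [← Matrix.compRingEquiv_apply, map_sub, map_one]
  simp only [comp_one_sub, Matrix.sub_apply, sub_smul, Finset.sum_sub_distrib, Matrix.one_apply,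
    ite_smul, one_smul, zero_smul, Finset.sum_ite_eq, Finset.mem_univ, if_true]
  rw [Fintype.sum_prod_type, Fintype.sum_prod_type]
  simp only [row_sum]

end FermionicStateSum

open FermionicStateSum

theorem fermionic_state_sum_circle_general {R V : Type*} [CommRing R] [AddCommGroup V]
    [Module R V] {n N : ℕ} [NeZero N] (Q : Fin N → Matrix (Fin n) (Fin n) R)
    (b a : Fin N × Fin n → V) :
    (∑ j : Fin N,
      ((∑ i : Fin n, ι R (b (j, i)) * ι R (a (j, i)))
        - ∑ i : Fin n, ∑ k : Fin n,
            Q j i k • (ι R (b (j, i)) * ι R (a (j + 1, k))))) ^ (N * n) =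
      (((N * n).factorial : R) *
        ((1 : Matrix (Fin n) (Fin n) R) - ((List.finRange N).map Q).prod).det) •
      ((List.finRange N).map (fun j =>
        ((List.finRange n).map (fun i => ι R (b (j, i)) * ι R (a (j, i)))).prod)).prod := by
  have gaussian := sum_smul_ι_mul_ι_pow_card (Matrix.comp _ _ _ _ R (1 - cycleMatrix Q)) b a
  rwa [sum_comp_one_sub_cycleMatrix_smul Q fun p q => ι R (b p) * ι R (a q),
    det_comp_one_sub_cycleMatrix, List.ofFn_eq_map, pairProd, noncommProd_univ_prod_fin,
    Fintype.card_prod, Fintype.card_fin, Fintype.card_fin] at gaussian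

/-- The fermionic state sum model on a circle triangulated with `N` edges, in
exterior-algebra form: for
`ω = Σ_j (Σ_i b_{j,i} ∧ a_{j,i} − Σ_{i,k} (Q_j)_{ik} b_{j,i} ∧ a_{(j+1) mod N, k})`,
`ω^{Nn} = (Nn)! · det(I − Q_0 ⋯ Q_{N−1}) · ⋀_j (b_{j,1} ∧ a_{j,1} ∧ ⋯ ∧ b_{j,n} ∧ a_{j,n})`,
i.e. the Berezin integral of `exp ω` equals `det (I - Q)` with `Q` the holonomy. -/
theorem fermionic_state_sum_circle
    (K : Type*) [Field K] [CharZero K] (n N : ℕ) (hn : 1 ≤ n) (hN : 1 ≤ N) [NeZero N]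
    (Q : Fin N → Matrix (Fin n) (Fin n) K)
    (b a : Fin N × Fin n → ((Fin N × Fin n ⊕ Fin N × Fin n) → K))
    (hb : ∀ p, b p = Pi.single (Sum.inl p) 1)
    (ha : ∀ p, a p = Pi.single (Sum.inr p) 1)
    (ω : ExteriorAlgebra K ((Fin N × Fin n ⊕ Fin N × Fin n) → K))
    (hω : ω = ∑ j : Fin N,
      ((∑ i : Fin n, ι K (b (j, i)) * ι K (a (j, i)))
        - ∑ i : Fin n, ∑ k : Fin n,
            Q j i k • (ι K (b (j, i)) * ι K (a (j + 1, k))))) :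
    ω ^ (N * n) = (((N * n).factorial : K) *
        ((1 : Matrix (Fin n) (Fin n) K) - ((List.finRange N).map Q).prod).det) •
      ((List.finRange N).map (fun j =>
        ((List.finRange n).map (fun i => ι K (b (j, i)) * ι K (a (j, i)))).prod)).prod := by
  rw [hω, fermionic_state_sum_circle_general]
end
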